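/- Let n ≥ 2 and let u be a C³ function on an open neighborhood of the closed unit ball B̄₁ ⊂ ℝⁿ with D²u positive definite everywhere and u = 0 on ∂B₁. Fix k ≠ l and let ∂ denote the angular derivative ξ_k ∂/∂ξ_l − ξ_l ∂/∂ξ_k. Define K : B₁ → (0,∞) by det D²u(ξ) = K(ξ)⁻¹·(1−|ξ|²)^{−(n+2)/2}. If C₁ > 0 is a constant with ∂(log K)(ξ) ≤ nC₁ for all ξ ∈ B₁, then ∂u(ξ) ≤ −C₁·u(ξ) for all ξ ∈ B̄₁. In particular, since u < 0 in B₁ by convexity, the angular derivative ∂u is bounded above in terms of C₁ and sup|u|. -/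

import Mathlib

open Real Filter Set

noncomputable section

/-- Partial derivative of `u` in the `i`-th coordinate direction. -/
def pd (n : ℕ) (u : (Fin n → ℝ) → ℝ) (i : Fin n) (x : Fin n → ℝ) : ℝ :=
  fderiv ℝ u x (Pi.single i 1)

/-- Hessian matrix of `u`. -/
def hess (n : ℕ) (u : (Fin n → ℝ) → ℝ) (x : Fin n → ℝ) : Matrix (Fin n) (Fin n) ℝ :=
  Matrix.of fun i j => pd n (pd n u j) i x

/-- Squared Euclidean norm of the gradient. -/
def gradSq (n : ℕ) (u : (Fin n → ℝ) → ℝ) (x : Fin n → ℝ) : ℝ :=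
  ∑ i, (pd n u i x) ^ 2

/-- `w = √(1 - |Du|²)`. -/
def wF (n : ℕ) (u : (Fin n → ℝ) → ℝ) (x : Fin n → ℝ) : ℝ :=
  Real.sqrt (1 - gradSq n u x)

/-- `γ^{ik} = δ_{ik} + u_i u_k / (w (1 + w))`. -/
def gammaM (n : ℕ) (u : (Fin n → ℝ) → ℝ) (x : Fin n → ℝ) : Matrix (Fin n) (Fin n) ℝ :=
  Matrix.of fun i k =>
    (if i = k then (1 : ℝ) else 0) + pd n u i x * pd n u k x / (wF n u x * (1 + wF n u x))

/-- The principal-curvature matrix `A[u] = (1/w) γ (D²u) γ`. -/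
def curvM (n : ℕ) (u : (Fin n → ℝ) → ℝ) (x : Fin n → ℝ) : Matrix (Fin n) (Fin n) ℝ :=
  (wF n u x)⁻¹ • (gammaM n u x * hess n u x * gammaM n u x)

/-- The positive cone `Γₙ⁺`. -/
def GammaPlus (n : ℕ) : Set (Fin n → ℝ) := {κ | ∀ i, 0 < κ i}

/-- `F(A) = 1 / f_*(κ₁⁻¹, …, κₙ⁻¹)` where `κᵢ` are the eigenvalues of `A`. -/
def Fc (n : ℕ) (fstar : (Fin n → ℝ) → ℝ) (A : Matrix (Fin n) (Fin n) ℝ) : ℝ :=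
  if h : A.IsHermitian then 1 / fstar (fun i => (h.eigenvalues i)⁻¹) else 0

/-- `F_*(A) = f_*(eigenvalues of A)`. -/
def FsM (n : ℕ) (fstar : (Fin n → ℝ) → ℝ) (A : Matrix (Fin n) (Fin n) ℝ) : ℝ :=
  if h : A.IsHermitian then fstar h.eigenvalues else 0

/-- `w* = √(1 - |ξ|²)`. -/
def wS (n : ℕ) (ξ : Fin n → ℝ) : ℝ := Real.sqrt (1 - ∑ i, (ξ i) ^ 2)

/-- `γ*_{ik} = δ_{ik} - ξᵢ ξ_k / (1 + w*)`. -/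
def gammaS (n : ℕ) (ξ : Fin n → ℝ) : Matrix (Fin n) (Fin n) ℝ :=
  Matrix.of fun i k => (if i = k then (1 : ℝ) else 0) - ξ i * ξ k / (1 + wS n ξ)

/-- The dual curvature matrix `A*[u*] = w* γ* (D²u*) γ*`. -/
def dualCurvM (n : ℕ) (ustar : (Fin n → ℝ) → ℝ) (ξ : Fin n → ℝ) :
    Matrix (Fin n) (Fin n) ℝ :=
  wS n ξ • (gammaS n ξ * hess n ustar ξ * gammaS n ξ)

/-- Open Euclidean ball of radius `r` about the origin. -/
def ballE (n : ℕ) (r : ℝ) : Set (Fin n → ℝ) := {ξ | ∑ i, (ξ i) ^ 2 < r ^ 2}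

/-- Closed Euclidean ball of radius `r` about the origin. -/
def cballE (n : ℕ) (r : ℝ) : Set (Fin n → ℝ) := {ξ | ∑ i, (ξ i) ^ 2 ≤ r ^ 2}

/-- Euclidean sphere of radius `r` about the origin. -/
def sphereE (n : ℕ) (r : ℝ) : Set (Fin n → ℝ) := {ξ | ∑ i, (ξ i) ^ 2 = r ^ 2}

/-- The full structural conditions on the curvature function `f_*`. -/
def FullStructural (n : ℕ) (fstar : (Fin n → ℝ) → ℝ) : Prop :=
  ContDiffOn ℝ (⊤ : ℕ∞) fstar (GammaPlus n) ∧
  ConcaveOn ℝ (GammaPlus n) fstar ∧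
  (∀ κ ∈ GammaPlus n, 0 < fstar κ) ∧
  (∀ κ ∈ frontier (GammaPlus n), fstar κ = 0) ∧
  (∀ κ ∈ GammaPlus n, ∀ i, 0 < fderiv ℝ fstar κ (Pi.single i 1)) ∧
  (∀ c : ℝ, 0 < c → ∀ κ ∈ GammaPlus n, fstar (c • κ) = c * fstar κ) ∧
  (∃ ε₀ > (0 : ℝ), ∀ κ ∈ GammaPlus n,
    ε₀ * fstar κ * (∑ i, κ i) ≤ ∑ i, fderiv ℝ fstar κ (Pi.single i 1) * (κ i) ^ 2) ∧
  (∀ C > (0 : ℝ), ∀ E : Set (Fin n → ℝ), IsCompact E → E ⊆ GammaPlus n →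
    ∀ i₀ : Fin n, ∃ R > (0 : ℝ), ∀ κ ∈ E, C < fstar (Function.update κ i₀ (κ i₀ + R))) ∧
  fstar (fun _ => 1) = 1

/-- Conditions A on the initial hypersurface. -/
def ConditionsA (n : ℕ) (u₀ : (Fin n → ℝ) → ℝ) (C₀ C₁ : ℝ) : Prop :=
  ContDiff ℝ (⊤ : ℕ∞) u₀ ∧
  (∀ x, gradSq n u₀ x < 1) ∧
  (∀ x, (hess n u₀ x).PosDef) ∧
  (∀ k : ℕ, ∀ i j : Fin n, ∃ M : ℝ, ∀ x,
      ‖iteratedFDeriv ℝ k (fun y => curvM n u₀ y i j) x‖ ≤ M) ∧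
  (∀ x, Real.sqrt ((∑ i, (x i) ^ 2) + C₀) < u₀ x ∧ u₀ x < Real.sqrt ((∑ i, (x i) ^ 2) + C₁))


lemma pd_congr {n : ℕ} {f g : (Fin n → ℝ) → ℝ} {x : Fin n → ℝ} (h : f =ᶠ[nhds x] g) (i : Fin n) :
    pd n f i x = pd n g i x := by
  unfold pd; rw [h.fderiv_eq]

lemma pd_add' {n : ℕ} {f g : (Fin n → ℝ) → ℝ} {x : Fin n → ℝ} (hf : DifferentiableAt ℝ f x)
    (hg : DifferentiableAt ℝ g x) (i : Fin n) :
    pd n (fun y => f y + g y) i x = pd n f i x + pd n g i x := by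
  unfold pd; rw [fderiv_fun_add hf hg]; rfl

lemma pd_sub' {n : ℕ} {f g : (Fin n → ℝ) → ℝ} {x : Fin n → ℝ} (hf : DifferentiableAt ℝ f x)
    (hg : DifferentiableAt ℝ g x) (i : Fin n) :
    pd n (fun y => f y - g y) i x = pd n f i x - pd n g i x := by
  unfold pd; rw [fderiv_fun_sub hf hg]; rfl

lemma pd_mul' {n : ℕ} {f g : (Fin n → ℝ) → ℝ} {x : Fin n → ℝ} (hf : DifferentiableAt ℝ f x)
    (hg : DifferentiableAt ℝ g x) (i : Fin n) :
    pd n (fun y => f y * g y) i x = pd n f i x * g x + f x * pd n g i x := by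
  unfold pd; rw [fderiv_fun_mul hf hg]; simp; ring

lemma pd_const' {n : ℕ} (c : ℝ) (x : Fin n → ℝ) (i : Fin n) :
    pd n (fun _ => c) i x = 0 := by
  unfold pd; simp

lemma pd_coord {n : ℕ} (k : Fin n) (x : Fin n → ℝ) (i : Fin n) :
    pd n (fun y => y k) i x = if k = i then 1 else 0 := by
  unfold pd
  have : HasFDerivAt (fun y : Fin n → ℝ => y k) (ContinuousLinearMap.proj (R := ℝ) (φ := fun _ : Fin n => ℝ) k) x :=
    (ContinuousLinearMap.proj (R := ℝ) (φ := fun _ : Fin n => ℝ) k).hasFDerivAt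
  rw [this.fderiv]
  simp [Pi.single_apply]

lemma pd_contDiffAt {n : ℕ} {f : (Fin n → ℝ) → ℝ} {x : Fin n → ℝ} {m p : WithTop ℕ∞}
    (hf : ContDiffAt ℝ p f x) (hm : m + 1 ≤ p) (i : Fin n) : ContDiffAt ℝ m (pd n f i) x := by
  unfold pd
  exact (hf.fderiv_right hm).clm_apply contDiffAt_const

lemma pd_comm {n : ℕ} {f : (Fin n → ℝ) → ℝ} {x : Fin n → ℝ}
    (hf : ContDiffAt ℝ 2 f x) (i j : Fin n) : pd n (pd n f j) i x = pd n (pd n f i) j x := by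
  have hd : DifferentiableAt ℝ (fderiv ℝ f) x :=
    (hf.fderiv_right (m := 1) (by norm_num)).differentiableAt (by norm_num)
  have key : ∀ a b : Fin n, pd n (pd n f b) a x =
      fderiv ℝ (fderiv ℝ f) x (Pi.single a 1) (Pi.single b 1) := by
    intro a b
    unfold pd
    rw [fderiv_clm_apply hd (differentiableAt_const _)]
    simp
  rw [key, key]
  exact hf.isSymmSndFDerivAt (by simp) _ _

lemma fderiv_eq_sum_pd {n : ℕ} (f : (Fin n → ℝ) → ℝ) (x a : Fin n → ℝ) :
    fderiv ℝ f x a = ∑ i, a i * pd n f i x := by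
  have := (fderiv ℝ f x).toLinearMap.pi_apply_eq_sum_univ a
  simp only [ContinuousLinearMap.coe_coe, smul_eq_mul] at this
  rw [this]
  refine Finset.sum_congr rfl fun i _ => ?_
  unfold pd
  congr 2
  ext j
  simp [Pi.single_apply, eq_comm]

/-- Jacobi's formula. -/
lemma pd_det {n : ℕ} (M : (Fin n → ℝ) → Matrix (Fin n) (Fin n) ℝ) (x : Fin n → ℝ)
    (hM : ∀ i j, DifferentiableAt ℝ (fun y => M y i j) x) (m : Fin n) :
    DifferentiableAt ℝ (fun y => (M y).det) x ∧
    pd n (fun y => (M y).det) m x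
      = ∑ i, ∑ j, (M x).adjugate j i * pd n (fun y => M y i j) m x := by
  let D : ContinuousMultilinearMap ℝ (fun _ : Fin n => Fin n → ℝ) ℝ :=
    { (Matrix.detRowAlternating (R := ℝ) (n := Fin n)).toMultilinearMap with
      cont := by
        show Continuous (fun A : Matrix (Fin n) (Fin n) ℝ => A.det)
        exact Continuous.matrix_det continuous_id }
  have hD : ∀ A : Matrix (Fin n) (Fin n) ℝ, D A = A.det := fun A => rfl
  let M' : (Fin n → ℝ) → (Fin n → Fin n → ℝ) := M
  have hM' : HasFDerivAt M' (fderiv ℝ M' x) x := by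
    refine DifferentiableAt.hasFDerivAt ?_
    rw [differentiableAt_pi]; intro i; rw [differentiableAt_pi]; intro j; exact hM i j
  have h := (D.hasFDerivAt (M' x)).comp x hM'
  have hfun : (D ∘ M') = fun y => (M y).det := rfl
  rw [hfun] at h
  refine ⟨h.differentiableAt, ?_⟩
  have hent : ∀ i j, pd n (fun y => M y i j) m x = fderiv ℝ M' x (Pi.single m 1) i j := by
    intro i j
    unfold pd
    have h1 := hasFDerivAt_pi'.1 (hasFDerivAt_pi'.1 hM' i) j
    have h2 : HasFDerivAt (fun y => M y i j) _ x := h1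
    rw [h2.fderiv]; rfl
  simp_rw [hent]
  unfold pd
  rw [h.fderiv]
  simp only [ContinuousLinearMap.comp_apply, ContinuousMultilinearMap.linearDeriv_apply]
  refine Finset.sum_congr rfl fun i _ => ?_
  have : D (Function.update (M' x) i ((fderiv ℝ M' x) (Pi.single m 1) i)) =
    ((M x).updateRow i ((fderiv ℝ M' x) (Pi.single m 1) i)).det := rfl
  rw [this, ← Matrix.cramer_transpose_apply]
  rw [Matrix.cramer_eq_adjugate_mulVec, Matrix.mulVec, dotProduct]
  refine Finset.sum_congr rfl fun j _ => ?_
  have e : (M x).transpose.adjugate i j = (M x).adjugate j i := by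
    rw [← Matrix.adjugate_transpose, Matrix.transpose_apply]
  exact congrArg (· * _) e

lemma posSemidef_sum_nonpos {n : ℕ} (B N : Matrix (Fin n) (Fin n) ℝ) (hB : B.PosSemidef)
    (hN : ∀ a : Fin n → ℝ, ∑ i, ∑ j, a i * a j * N i j ≤ 0) :
    ∑ i, ∑ j, B i j * N i j ≤ 0 := by
  obtain ⟨m, A, hA⟩ := Matrix.posSemidef_iff_eq_sum_vecMulVec.mp hB
  have : ∑ i, ∑ j, B i j * N i j = ∑ r, ∑ i, ∑ j, A r i * A r j * N i j := by
    rw [Finset.sum_comm (s := (Finset.univ : Finset (Fin m)))]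
    refine Finset.sum_congr rfl fun i _ => ?_
    rw [Finset.sum_comm]
    refine Finset.sum_congr rfl fun j _ => ?_
    rw [hA, Matrix.sum_apply, Finset.sum_mul]
    simp [Matrix.vecMulVec_apply]
  rw [this]
  exact Finset.sum_nonpos fun r _ => hN _

lemma second_deriv_nonpos {n : ℕ} {v : (Fin n → ℝ) → ℝ} {x : Fin n → ℝ}
    (hv : ContDiffAt ℝ 2 v x) (hmax : IsLocalMax v x) (a : Fin n → ℝ) :
    ∑ i, ∑ j, a i * a j * pd n (pd n v j) i x ≤ 0 := by
  by_contra hcon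
  push Not at hcon
  let c : ℝ → (Fin n → ℝ) := fun t => x + t • a
  have hc0 : c 0 = x := by simp [c]
  have hc : ∀ t, HasDerivAt c a t := fun t => by
    simpa [c] using ((hasDerivAt_id t).smul_const a).const_add x
  have hcc : ContinuousAt c 0 := (hc 0).continuousAt
  have hct : Tendsto c (nhds 0) (nhds x) := by rw [← hc0]; exact hcc
  have hev : ∀ᶠ y in nhds x, DifferentiableAt ℝ v y := by
    filter_upwards [hv.eventually (by simp)] with y hy
    exact hy.differentiableAt (by norm_num)
  have hd1 : deriv (fun t => v (c t)) =ᶠ[nhds 0] fun t => ∑ j, a j * pd n v j (c t) := by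
    filter_upwards [hct.eventually hev] with t ht
    rw [← fderiv_eq_sum_pd]
    exact (ht.hasFDerivAt.comp_hasDerivAt t (hc t)).deriv
  have hd2 : deriv (deriv (fun t => v (c t))) 0 = ∑ i, ∑ j, a i * a j * pd n (pd n v j) i x := by
    rw [hd1.deriv_eq]
    have : HasDerivAt (fun t => ∑ j, a j * pd n v j (c t))
        (∑ j, a j * fderiv ℝ (pd n v j) x a) 0 := by
      refine HasDerivAt.fun_sum fun j _ => ?_
      refine HasDerivAt.const_mul _ ?_
      have hp : DifferentiableAt ℝ (pd n v j) (c 0) := by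
        rw [hc0]
        exact (pd_contDiffAt (m := 1) hv (by norm_num) j).differentiableAt (by norm_num)
      have := hp.hasFDerivAt.comp_hasDerivAt 0 (hc 0)
      rw [hc0] at this
      exact this
    rw [this.deriv, Finset.sum_comm]
    refine Finset.sum_congr rfl fun j _ => ?_
    rw [fderiv_eq_sum_pd, Finset.mul_sum]
    refine Finset.sum_congr rfl fun i _ => ?_
    ring
  have hlm : IsLocalMax (fun t => v (c t)) 0 := by
    have : ∀ᶠ t in nhds (0:ℝ), v (c t) ≤ v x := hct.eventually hmax
    filter_upwards [this] with t ht
    rw [hc0]; exact ht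
  have hcont : ContinuousAt (fun t => v (c t)) 0 := by
    refine ContinuousAt.comp (g := v) ?_ hcc
    rw [hc0]; exact hv.continuousAt
  have hmin := isLocalMin_of_deriv_deriv_pos (by rw [hd2]; exact hcon) hlm.deriv_eq_zero hcont
  have hconst : (fun t => v (c t)) =ᶠ[nhds 0] fun _ => v (c 0) := by
    filter_upwards [hlm, hmin] with t h1 h2
    exact le_antisymm h1 h2
  have h3 : deriv (fun t => v (c t)) =ᶠ[nhds 0] fun _ => 0 := by
    simpa using hconst.deriv
  have h4 := h3.deriv_eq
  rw [hd2] at h4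
  simp at h4
  linarith

/-- Tangential derivative vanishes on the sphere. -/
lemma tangential_zero {n : ℕ} {u : (Fin n → ℝ) → ℝ} {x : Fin n → ℝ} (hx : x ∈ sphereE n 1)
    (hu : DifferentiableAt ℝ u x) (hbd : ∀ ξ ∈ sphereE n 1, u ξ = 0) (k l : Fin n) (hkl : k ≠ l) :
    x k * pd n u l x - x l * pd n u k x = 0 := by
  let c : ℝ → (Fin n → ℝ) := fun t => x
    + (x k * (Real.cos t - 1) - x l * Real.sin t) • Pi.single k (1:ℝ)
    + (x l * (Real.cos t - 1) + x k * Real.sin t) • Pi.single l (1:ℝ)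
  have hc0 : c 0 = x := by simp [c]
  have hcd : HasDerivAt c ((-x l) • Pi.single k (1:ℝ) + (x k) • Pi.single l (1:ℝ)) 0 := by
    have h1 : HasDerivAt (fun t => x k * (Real.cos t - 1) - x l * Real.sin t) (-x l) 0 := by
      have := (((Real.hasDerivAt_cos 0).sub_const 1).const_mul (x k)).fun_sub
        ((Real.hasDerivAt_sin 0).const_mul (x l))
      simpa using this
    have h2 : HasDerivAt (fun t => x l * (Real.cos t - 1) + x k * Real.sin t) (x k) 0 := by
      have := (((Real.hasDerivAt_cos 0).sub_const 1).const_mul (x l)).fun_add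
        ((Real.hasDerivAt_sin 0).const_mul (x k))
      simpa using this
    exact ((h1.smul_const _).const_add x).add (h2.smul_const _)
  have hmem : ∀ t, c t ∈ sphereE n 1 := by
    intro t
    have hx' : ∑ i, x i ^ 2 = 1 ^ 2 := hx
    show ∑ i, (c t i) ^ 2 = 1 ^ 2
    rw [← hx', ← sub_eq_zero, ← Finset.sum_sub_distrib]
    have hsplit : ∀ i, c t i ^ 2 - x i ^ 2 =
        (if i = k then (x k * Real.cos t - x l * Real.sin t) ^ 2 - x k ^ 2 else 0)
        + (if i = l then (x l * Real.cos t + x k * Real.sin t) ^ 2 - x l ^ 2 else 0) := by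
      intro i
      by_cases hik : i = k
      · subst hik
        simp [c, hkl]
        ring
      · by_cases hil : i = l
        · subst hil
          simp [c, hik]
          ring
        · simp [c, hik, hil]
    simp_rw [hsplit]
    rw [Finset.sum_add_distrib]
    simp only [Finset.sum_ite_eq', Finset.mem_univ, if_true]
    linear_combination (x k ^ 2 + x l ^ 2) * Real.sin_sq_add_cos_sq t
  have hu' : HasFDerivAt u (fderiv ℝ u x) (c 0) := by rw [hc0]; exact hu.hasFDerivAt
  have h := hu'.comp_hasDerivAt 0 hcd
  have h0 : (u ∘ c) = fun _ => 0 := by funext t; exact hbd _ (hmem t)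
  rw [h0] at h
  have := h.unique (hasDerivAt_const 0 0)
  simp only [map_add, map_smul, smul_eq_mul] at this
  unfold pd
  linarith

lemma compact_cball (n : ℕ) : IsCompact (cballE n 1) := by
  refine Metric.isCompact_of_isClosed_isBounded ?_ ?_
  · exact isClosed_le (by fun_prop) continuous_const
  · refine (Metric.isBounded_closedBall (x := (0 : Fin n → ℝ)) (r := 1)).subset ?_
    intro x hx
    rw [mem_closedBall_zero_iff, pi_norm_le_iff_of_nonneg zero_le_one]
    intro i
    have h1 : ∑ i, x i ^ 2 ≤ 1 ^ 2 := hx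
    have h2 : x i ^ 2 ≤ ∑ i, x i ^ 2 :=
      Finset.single_le_sum (f := fun i => x i ^ 2) (fun j _ => sq_nonneg _) (Finset.mem_univ i)
    rw [Real.norm_eq_abs]
    have h3 : x i ^ 2 ≤ 1 ^ 2 := h2.trans h1
    exact abs_le_of_sq_le_sq h3 zero_le_one

lemma open_ball (n : ℕ) : IsOpen (ballE n 1) :=
  isOpen_lt (by fun_prop) continuous_const

lemma pd_log {n : ℕ} {f : (Fin n → ℝ) → ℝ} {x : Fin n → ℝ} (hf : DifferentiableAt ℝ f x)
    (h0 : f x ≠ 0) (i : Fin n) :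
    pd n (fun y => Real.log (f y)) i x = (f x)⁻¹ * pd n f i x := by
  unfold pd; rw [(hf.hasFDerivAt.log h0).fderiv]; simp

lemma pd_one_sub_normSq {n : ℕ} (x : Fin n → ℝ) (m : Fin n) :
    DifferentiableAt ℝ (fun y : Fin n → ℝ => 1 - ∑ i, y i ^ 2) x ∧
    pd n (fun y => 1 - ∑ i, y i ^ 2) m x = - 2 * x m := by
  have h : HasFDerivAt (fun y : Fin n → ℝ => 1 - ∑ i, y i ^ 2)
      (-(∑ i, (2 * x i) • ContinuousLinearMap.proj (R := ℝ) (φ := fun _ : Fin n => ℝ) i)) x := by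
    refine HasFDerivAt.const_sub ?_ _
    refine HasFDerivAt.fun_sum fun i _ => ?_
    have := ((ContinuousLinearMap.proj (R := ℝ) (φ := fun _ : Fin n => ℝ) i).hasFDerivAt
      (x := x)).pow 2
    simpa using this
  refine ⟨h.differentiableAt, ?_⟩
  unfold pd
  rw [h.fderiv]
  simp [Pi.single_apply]

lemma pd_v1 {n : ℕ} {u : (Fin n → ℝ) → ℝ} {y : Fin n → ℝ} (hu : ContDiffAt ℝ 2 u y)
    (k l j : Fin n) (C : ℝ) :
    pd n (fun η => (η k * pd n u l η - η l * pd n u k η) + C * u η) j y =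
      (((if k = j then 1 else 0) * pd n u l y + y k * pd n (pd n u l) j y)
      - ((if l = j then 1 else 0) * pd n u k y + y l * pd n (pd n u k) j y))
      + C * pd n u j y := by
  have hu1 : DifferentiableAt ℝ u y := hu.differentiableAt (by norm_num)
  have hp : ∀ m, DifferentiableAt ℝ (pd n u m) y := fun m =>
    (pd_contDiffAt (m := 1) hu (by norm_num) m).differentiableAt (by norm_num)
  have hx : ∀ m, DifferentiableAt ℝ (fun η : Fin n → ℝ => η m) y := fun m => by fun_prop
  rw [pd_add' (((hx k).fun_mul (hp l)).fun_sub ((hx l).fun_mul (hp k))) (hu1.const_mul C),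
    pd_sub' ((hx k).fun_mul (hp l)) ((hx l).fun_mul (hp k)), pd_mul' (hx k) (hp l),
    pd_mul' (hx l) (hp k), pd_mul' (differentiableAt_const C) hu1, pd_const', pd_coord, pd_coord]
  ring

lemma pd_v2 {n : ℕ} {u : (Fin n → ℝ) → ℝ} {x : Fin n → ℝ} (hu : ContDiffAt ℝ 3 u x)
    (k l i j : Fin n) (C : ℝ) :
    pd n (pd n (fun η => (η k * pd n u l η - η l * pd n u k η) + C * u η) j) i x =
      (((if k = j then 1 else 0) * hess n u x i l + (if k = i then 1 else 0) * hess n u x j l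
          + x k * pd n (fun y => hess n u y i j) l x)
      - ((if l = j then 1 else 0) * hess n u x i k + (if l = i then 1 else 0) * hess n u x j k
          + x l * pd n (fun y => hess n u y i j) k x))
      + C * hess n u x i j := by
  have hev : ∀ᶠ y in nhds x, ContDiffAt ℝ 2 u y := by
    filter_upwards [hu.eventually (by simp)] with y hy
    exact hy.of_le (by norm_num)
  have hp2 : ∀ m, ContDiffAt ℝ 2 (pd n u m) x := fun m => pd_contDiffAt hu (by norm_num) m
  have hp : ∀ m, DifferentiableAt ℝ (pd n u m) x := fun m =>
    (hp2 m).differentiableAt (by norm_num)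
  have hpp : ∀ m j, DifferentiableAt ℝ (pd n (pd n u m) j) x := fun m j =>
    (pd_contDiffAt (m := 1) (hp2 m) (by norm_num) j).differentiableAt (by norm_num)
  have hx : ∀ m, DifferentiableAt ℝ (fun η : Fin n → ℝ => η m) x := fun m => by fun_prop
  have hT : ∀ m, pd n (pd n (pd n u m) j) i x = pd n (fun y => hess n u y i j) m x := by
    intro m
    have h1 : pd n (pd n u m) j =ᶠ[nhds x] pd n (pd n u j) m := by
      filter_upwards [hev] with y hy
      exact pd_comm hy _ _
    rw [pd_congr h1, pd_comm (hp2 j)]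
    rfl
  have hfirst : pd n (fun η => (η k * pd n u l η - η l * pd n u k η) + C * u η) j =ᶠ[nhds x]
      fun y => (((if k = j then 1 else 0) * pd n u l y + y k * pd n (pd n u l) j y)
      - ((if l = j then 1 else 0) * pd n u k y + y l * pd n (pd n u k) j y))
      + C * pd n u j y := by
    filter_upwards [hev] with y hy
    exact pd_v1 hy k l j C
  rw [pd_congr hfirst]
  generalize (if k = j then (1:ℝ) else 0) = a
  generalize (if l = j then (1:ℝ) else 0) = b
  have A1 := (hp l).const_mul a
  have A2 := (hx k).fun_mul (hpp l j)
  have B1 := (hp k).const_mul b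
  have B2 := (hx l).fun_mul (hpp k j)
  rw [pd_add' ((A1.fun_add A2).fun_sub (B1.fun_add B2)) ((hp j).const_mul C),
    pd_sub' (A1.fun_add A2) (B1.fun_add B2), pd_add' A1 A2, pd_add' B1 B2,
    pd_mul' (differentiableAt_const a) (hp l), pd_mul' (differentiableAt_const b) (hp k),
    pd_mul' (differentiableAt_const C) (hp j), pd_mul' (hx k) (hpp l j), pd_mul' (hx l) (hpp k j),
    pd_const', pd_const', pd_const', pd_coord, pd_coord, hT, hT]
  simp only [hess, Matrix.of_apply]
  ring

/-- The angular derivative of `log det D²u` equals minus that of `log K`. -/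
lemma ang_logK {n : ℕ} {u K : (Fin n → ℝ) → ℝ} {x : Fin n → ℝ} (hx : x ∈ ballE n 1)
    (hu : ContDiffAt ℝ 3 u x)
    (hpd : ∀ ξ ∈ ballE n 1, (hess n u ξ).PosDef)
    (hKpos : ∀ ξ ∈ ballE n 1, 0 < K ξ)
    (hK : ∀ ξ ∈ ballE n 1,
      (hess n u ξ).det = (K ξ)⁻¹ * (1 - ∑ i, (ξ i) ^ 2) ^ (-((n : ℝ) + 2) / 2))
    (k l : Fin n) :
    x k * pd n (fun η => Real.log (K η)) l x - x l * pd n (fun η => Real.log (K η)) k x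
      = - (x k * ∑ i, ∑ j, (hess n u x)⁻¹ i j * pd n (fun y => hess n u y i j) l x
        - x l * ∑ i, ∑ j, (hess n u x)⁻¹ i j * pd n (fun y => hess n u y i j) k x) := by
  have hH := hpd x hx
  have hdet := hH.det_pos
  have hsym : ∀ i j, (hess n u x)⁻¹ j i = (hess n u x)⁻¹ i j := fun i j => by
    simpa using hH.inv.isHermitian.apply i j
  have hpos : ∀ y ∈ ballE n 1, 0 < 1 - ∑ i, y i ^ 2 := fun y hy => by
    have : ∑ i, y i ^ 2 < 1 ^ 2 := hy
    linarith
  have hlog : (fun η => Real.log (K η)) =ᶠ[nhds x] fun η =>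
      (-((n : ℝ) + 2) / 2) * Real.log (1 - ∑ i, η i ^ 2) - Real.log ((hess n u η).det) := by
    filter_upwards [(open_ball n).mem_nhds hx] with y hy
    rw [hK y hy, Real.log_mul (inv_ne_zero (hKpos y hy).ne') (Real.rpow_pos_of_pos (hpos y hy) _).ne',
      Real.log_rpow (hpos y hy), Real.log_inv]
    ring
  have hent : ∀ i j, DifferentiableAt ℝ (fun y => hess n u y i j) x := fun i j =>
    (pd_contDiffAt (m := 1) (pd_contDiffAt (m := 2) hu (by norm_num) j) (by norm_num)
      i).differentiableAt (by norm_num)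
  have hJ : ∀ m, pd n (fun y => Real.log ((hess n u y).det)) m x =
      ∑ i, ∑ j, (hess n u x)⁻¹ i j * pd n (fun y => hess n u y i j) m x := by
    intro m
    obtain ⟨h1, h2⟩ := pd_det (fun y => hess n u y) x hent m
    rw [pd_log h1 hdet.ne', h2, Finset.mul_sum]
    refine Finset.sum_congr rfl fun i _ => ?_
    rw [Finset.mul_sum]
    refine Finset.sum_congr rfl fun j _ => ?_
    rw [← hsym i j, Matrix.inv_def, Ring.inverse_eq_inv', Matrix.smul_apply, smul_eq_mul]
    ring
  have hm : ∀ m, pd n (fun η => Real.log (K η)) m x =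
      (-((n : ℝ) + 2) / 2) * ((1 - ∑ i, x i ^ 2)⁻¹ * (-2 * x m))
      - ∑ i, ∑ j, (hess n u x)⁻¹ i j * pd n (fun y => hess n u y i j) m x := by
    intro m
    obtain ⟨h1, h2⟩ := pd_one_sub_normSq x m
    have h3 := h1.log (hpos x hx).ne'
    have h4 := (pd_det (fun y => hess n u y) x hent m).1.log hdet.ne'
    rw [pd_congr hlog, pd_sub' (h3.const_mul _) h4, pd_mul' (differentiableAt_const _) h3,
      pd_const', hJ, pd_log h1 (hpos x hx).ne', h2]
    ring
  rw [hm, hm]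
  ring

lemma interior_contra {n : ℕ} (hn : 2 ≤ n) {u : (Fin n → ℝ) → ℝ} {x : Fin n → ℝ}
    (hu : ContDiffAt ℝ 3 u x) (hpd : (hess n u x).PosDef)
    (k l : Fin n) (hkl : k ≠ l) (C C₁ : ℝ) (hC : C₁ < C)
    (hang : - (x k * ∑ i, ∑ j, (hess n u x)⁻¹ i j * pd n (fun y => hess n u y i j) l x
        - x l * ∑ i, ∑ j, (hess n u x)⁻¹ i j * pd n (fun y => hess n u y i j) k x) ≤ n * C₁)
    (hmax : IsLocalMax (fun η => (η k * pd n u l η - η l * pd n u k η) + C * u η) x) : False := by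
  have hp2 : ∀ m, ContDiffAt ℝ 2 (pd n u m) x := fun m => pd_contDiffAt hu (by norm_num) m
  have hx : ∀ m, ContDiffAt ℝ 2 (fun η : Fin n → ℝ => η m) x := fun m => by fun_prop
  have hv : ContDiffAt ℝ 2 (fun η => (η k * pd n u l η - η l * pd n u k η) + C * u η) x :=
    (((hx k).mul (hp2 l)).sub ((hx l).mul (hp2 k))).add
      (contDiffAt_const.mul (hu.of_le (by norm_num)))
  have hN := posSemidef_sum_nonpos ((hess n u x)⁻¹)
    (Matrix.of fun i j =>
      pd n (pd n (fun η => (η k * pd n u l η - η l * pd n u k η) + C * u η) j) i x)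
    hpd.inv.posSemidef (fun a => second_deriv_nonpos hv hmax a)
  simp only [Matrix.of_apply, pd_v2 hu] at hN
  have hsym : ∀ i j, (hess n u x)⁻¹ j i = (hess n u x)⁻¹ i j := fun i j => by
    simpa using hpd.inv.isHermitian.apply i j
  have hHsym : ∀ i j, (hess n u x) j i = (hess n u x) i j := fun i j => by
    simpa using hpd.isHermitian.apply i j
  have hmul : (hess n u x)⁻¹ * hess n u x = 1 :=
    Matrix.nonsing_inv_mul _ (isUnit_iff_ne_zero.2 hpd.det_pos.ne')
  generalize hess n u x = H at *
  have e1 : ∀ a b : Fin n, ∑ j, H⁻¹ a j * H j b = if a = b then 1 else 0 := fun a b => by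
    rw [← Matrix.mul_apply, hmul, Matrix.one_apply]
  have s1 : ∀ a b : Fin n, a ≠ b →
      ∑ i, ∑ j, H⁻¹ i j * ((if a = j then 1 else 0) * H i b) = 0 := by
    intro a b hab
    have := e1 a b
    rw [if_neg hab] at this
    refine Eq.trans ?_ this
    refine Finset.sum_congr rfl fun i _ => ?_
    simp [hsym a i]
  have s2 : ∀ a b : Fin n, a ≠ b →
      ∑ i, ∑ j, H⁻¹ i j * ((if a = i then 1 else 0) * H j b) = 0 := by
    intro a b hab
    have := e1 a b
    rw [if_neg hab] at this
    rw [Finset.sum_comm]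
    refine Eq.trans ?_ this
    refine Finset.sum_congr rfl fun i _ => ?_
    simp
  have s3 : ∑ i, ∑ j, H⁻¹ i j * H i j = n := by
    have : ∀ i, ∑ j, H⁻¹ i j * H i j = 1 := fun i => by
      have := e1 i i
      rw [if_pos rfl] at this
      rw [← this]
      exact Finset.sum_congr rfl fun j _ => by rw [hHsym i j]
    simp [this]
  have split : ∀ (T T' : Fin n → Fin n → ℝ),
      ∑ i, ∑ j, H⁻¹ i j * ((((if k = j then 1 else 0) * H i l + (if k = i then 1 else 0) * H j l
          + x k * T i j)
      - ((if l = j then 1 else 0) * H i k + (if l = i then 1 else 0) * H j k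
          + x l * T' i j)) + C * H i j)
      = ((∑ i, ∑ j, H⁻¹ i j * ((if k = j then 1 else 0) * H i l))
        + (∑ i, ∑ j, H⁻¹ i j * ((if k = i then 1 else 0) * H j l))
        + x k * ∑ i, ∑ j, H⁻¹ i j * T i j)
        - ((∑ i, ∑ j, H⁻¹ i j * ((if l = j then 1 else 0) * H i k))
        + (∑ i, ∑ j, H⁻¹ i j * ((if l = i then 1 else 0) * H j k))
        + x l * ∑ i, ∑ j, H⁻¹ i j * T' i j)
        + C * ∑ i, ∑ j, H⁻¹ i j * H i j := by
    intro T T'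
    simp only [Finset.mul_sum, ← Finset.sum_add_distrib, ← Finset.sum_sub_distrib]
    refine Finset.sum_congr rfl fun i _ => Finset.sum_congr rfl fun j _ => ?_
    ring
  rw [split, s1 k l hkl, s2 k l hkl, s1 l k hkl.symm, s2 l k hkl.symm, s3] at hN
  have hn' : (0:ℝ) < n := by exact_mod_cast (by omega : 0 < n)
  nlinarith [mul_lt_mul_of_pos_left hC hn']

/-- Angular-derivative bound for the Legendre transform of the initial
data: if `det D²u = K⁻¹ (1−|ξ|²)^{−(n+2)/2}` and the angular derivative of `log K` is at
most `n C₁` in `B₁`, then `∂u ≤ −C₁ u` on `B̄₁`, where `∂ = ξ_k ∂/∂ξ_l − ξ_l ∂/∂ξ_k`. -/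
theorem statement14 (n : ℕ) (hn : 2 ≤ n)
    (S : Set (Fin n → ℝ)) (hS : IsOpen S) (hsub : cballE n 1 ⊆ S)
    (u : (Fin n → ℝ) → ℝ) (hu : ContDiffOn ℝ 3 u S)
    (hpd : ∀ ξ ∈ S, (hess n u ξ).PosDef)
    (hbd : ∀ ξ ∈ sphereE n 1, u ξ = 0)
    (k l : Fin n) (hkl : k ≠ l)
    (K : (Fin n → ℝ) → ℝ) (hKpos : ∀ ξ ∈ ballE n 1, 0 < K ξ)
    (hK : ∀ ξ ∈ ballE n 1,
      (hess n u ξ).det = (K ξ)⁻¹ * (1 - ∑ i, (ξ i) ^ 2) ^ (-((n : ℝ) + 2) / 2))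
    (C₁ : ℝ) (hC₁ : 0 < C₁)
    (hang : ∀ ξ ∈ ballE n 1,
      ξ k * pd n (fun η => Real.log (K η)) l ξ
        - ξ l * pd n (fun η => Real.log (K η)) k ξ ≤ n * C₁) :
    ∀ ξ ∈ cballE n 1, ξ k * pd n u l ξ - ξ l * pd n u k ξ ≤ -C₁ * u ξ := by
  have hcd : ∀ ξ ∈ S, ContDiffAt ℝ 3 u ξ := fun ξ hξ => hu.contDiffAt (hS.mem_nhds hξ)
  have hbc : ballE n 1 ⊆ cballE n 1 := fun y (hy : ∑ i, y i ^ 2 < 1 ^ 2) =>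
    show ∑ i, y i ^ 2 ≤ 1 ^ 2 from hy.le
  have hbS : ballE n 1 ⊆ S := hbc.trans hsub
  have main : ∀ C, C₁ < C → ∀ ξ ∈ cballE n 1,
      (ξ k * pd n u l ξ - ξ l * pd n u k ξ) + C * u ξ ≤ 0 := by
    intro C hC ξ hξ
    have hcont : ContinuousOn
        (fun η => (η k * pd n u l η - η l * pd n u k η) + C * u η) (cballE n 1) := by
      intro y hy
      have h3 := hcd y (hsub hy)
      have hp : ∀ m, ContinuousAt (pd n u m) y := fun m =>
        (pd_contDiffAt (m := 2) h3 (by norm_num) m).continuousAt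
      have hx : ∀ m, ContinuousAt (fun η : Fin n → ℝ => η m) y := fun m =>
        (continuous_apply m).continuousAt
      exact ((((hx k).mul (hp l)).sub ((hx l).mul (hp k))).add
        (continuousAt_const.mul h3.continuousAt)).continuousWithinAt
    obtain ⟨x, hx, hmax⟩ := (compact_cball n).exists_isMaxOn ⟨ξ, hξ⟩ hcont
    have hle := hmax hξ
    by_cases hxb : x ∈ ballE n 1
    · exfalso
      have hloc : IsLocalMax (fun η => (η k * pd n u l η - η l * pd n u k η) + C * u η) x :=
        hmax.isLocalMax (mem_of_superset ((open_ball n).mem_nhds hxb) hbc)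
      have h3 := hcd x (hsub hx)
      have ha := hang x hxb
      rw [ang_logK hxb h3 (fun y hy => hpd y (hbS hy)) hKpos hK k l] at ha
      exact interior_contra hn h3 (hpd x (hsub hx)) k l hkl C C₁ hC ha hloc
    · have hxs : x ∈ sphereE n 1 := by
        have h1 : ∑ i, x i ^ 2 ≤ 1 ^ 2 := hx
        have h2 : ¬ ∑ i, x i ^ 2 < 1 ^ 2 := hxb
        exact le_antisymm h1 (not_lt.1 h2)
      have h0 := tangential_zero hxs ((hcd x (hsub hx)).differentiableAt (by norm_num)) hbd k l hkl
      have hux := hbd x hxs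
      simp only [mem_ofPred_eq] at hle
      rw [h0, hux] at hle
      simpa using hle
  intro ξ hξ
  have hlim : Tendsto (fun C : ℝ => (ξ k * pd n u l ξ - ξ l * pd n u k ξ) + C * u ξ)
      (nhdsWithin C₁ (Ioi C₁)) (nhds ((ξ k * pd n u l ξ - ξ l * pd n u k ξ) + C₁ * u ξ)) := by
    refine Tendsto.mono_left ?_ nhdsWithin_le_nhds
    exact Continuous.tendsto (by fun_prop) C₁
  have := le_of_tendsto hlim (by
    filter_upwards [self_mem_nhdsWithin] with C hC
    exact main C hC ξ hξ)
  linarith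

end
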